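/- Let σ and τ be primitive substitutions, both prolongable on the letter a, with fixed points x = σ^ω(a) and y = τ^ω(a), and suppose x is non-periodic. Then x = y if and only if x and y share a common nonempty prefix u such that there exist positive integers i and j with τ_u^i = σ_u^j (equivalently, such that τ^i(w) = σ^j(w) for every return word w ∈ ℛ_{x,u}). -/

import Mathlib

/-!
If powers `τ^i` and `σ^j` agree on the return words to a common prefix, then they agree on the
prefixes of `x` that are concatenations of such words. Hence `τ^i` maps prefixes of `x` to
prefixes of `x`; all `τ^(i n)(a)` are then prefixes of both `x` and `y`, and `x = y`
(`eq_of_powers_agree`).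

For the converse let `x = y`, and write `S`, `T` for the position maps `i ↦ |σ(x_[0,i))|` and
`i ↦ |τ(x_[0,i))|`. Iterates of `S` and `T` map occurrences of a prefix of `x` to occurrences
of its image. For each `t` put `p_t = |σ^t(a)|` and choose `μ t` such that `P_t = |τ^(μ t)(a)|`
is at least `p_t` and comparable with it. Consider the blocks into which `x` is cut by a level
of `σ` (resp. `τ`) slightly above `t` (resp. `μ t`), where all blocks are at least `P_t` long
and of length `O(p_t)`. Because `x` is aperiodic, a prefix of length `ℓ` has return words of
length at least `ℓ / K` for a constant `K` (`exists_gap`), so each block contains a bounded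
number of occurrences of the prefixes of length `p_t` and `P_t`. Which ones it contains depends
only on two consecutive letters of `x`. By the pigeonhole principle there are `t < t'`, with
`μ t < μ t'`, having the same block counts and the same ranks of `P`-occurrences among
`p`-occurrences.

The map `S^(t'-t)` is increasing, sends `p_t`-occurrences to `p_t'`-occurrences, and preserves
ranks at the block boundaries, which are unbounded. An increasing map cannot catch up with a
rank it has once skipped, so it preserves all ranks (`cnt_map`). As the ranks of `P`-occurrences
coincide, it also sends `P_t`-occurrences to `P_t'`-occurrences, and again preserves their
ranks. So does `T^(μ t' - μ t)`. Therefore both maps send the `n`-th `P_t`-occurrence to the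
`n`-th `P_t'`-occurrence (`exists_powers_agree`), which says that `σ^(t'-t)` and
`τ^(μ t' - μ t)` agree on the return words to the prefix of length `P_t`.
-/

namespace Rauzy

variable {A B Γ : Type*}

/-- The factor `x_[i, i+n)` of length `n` of the sequence `x`, starting at position `i`. -/
def factorAt (x : ℕ → A) (i n : ℕ) : List A :=
  (List.range n).map fun k => x (i + k)

/-- The word `w` occurs in the sequence `x` at position `i`. -/
def OccursAt (x : ℕ → A) (w : List A) (i : ℕ) : Prop :=
  factorAt x i w.length = w

/-- The word `w` is a factor of the sequence `x`. -/
def IsFactor (x : ℕ → A) (w : List A) : Prop :=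
  ∃ i, OccursAt x w i

/-- The word `w` is a prefix of the sequence `x`. -/
def IsPrefixSeq (x : ℕ → A) (w : List A) : Prop :=
  OccursAt x w 0

/-- The sequence `x` is uniformly recurrent: every factor occurs with bounded gaps. -/
def UniformlyRecurrent (x : ℕ → A) : Prop :=
  ∀ w : List A, IsFactor x w → ∃ N, ∀ i, ∃ j, i ≤ j ∧ j < i + N ∧ OccursAt x w j

/-- `i < j` are two successive occurrences of `u` in `x`. -/
def SuccessiveOccs (x : ℕ → A) (u : List A) (i j : ℕ) : Prop :=
  i < j ∧ OccursAt x u i ∧ OccursAt x u j ∧ ∀ k, i < k → k < j → ¬ OccursAt x u k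

/-- The word `w` is a return word to `u` in `x`. -/
def IsReturnWord (x : ℕ → A) (u w : List A) : Prop :=
  ∃ i j, SuccessiveOccs x u i j ∧ w = factorAt x i (j - i)

/-- The set `ℛ_{x,u}` of return words to `u` in `x`. -/
def returnWords (x : ℕ → A) (u : List A) : Set (List A) :=
  {w | IsReturnWord x u w}

/-- The next occurrence of `u` in `x` strictly after position `i`. -/
noncomputable def nextOcc (x : ℕ → A) (u : List A) (i : ℕ) : ℕ :=
  sInf {j | i < j ∧ OccursAt x u j}

/-- The increasing enumeration of the occurrences of the prefix `u` in `x`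
(position `0` is an occurrence since `u` is a prefix). -/
noncomputable def occSeq (x : ℕ → A) (u : List A) : ℕ → ℕ
  | 0 => 0
  | n + 1 => nextOcc x u (occSeq x u n)

/-- The `n`-th return word `mₙ` in the decomposition `x = m₀m₁m₂⋯` of `x`
into return words to the prefix `u`. -/
noncomputable def retWord (x : ℕ → A) (u : List A) (n : ℕ) : List A :=
  factorAt x (occSeq x u n) (occSeq x u (n + 1) - occSeq x u n)

/-- The first index `n` such that `mₙ = w` in the decomposition of `x` into
return words to `u`. -/
noncomputable def firstIdx (x : ℕ → A) (u w : List A) : ℕ :=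
  sInf {n | retWord x u n = w}

open Classical in
/-- The derived sequence `D_u(x)` of `x` on the prefix `u`, with the return words
labelled `0, 1, 2, …` in the order of their first appearance in the decomposition
`x = m₀m₁m₂⋯` : the label of `mₙ` is the number of distinct return words appearing
strictly before the first occurrence of `mₙ`. -/
noncomputable def derivedSeq (x : ℕ → A) (u : List A) (n : ℕ) : ℕ :=
  ((Finset.range (firstIdx x u (retWord x u n))).image (retWord x u)).card

/-- The alphabet `R_{x,u} = {0, …, #ℛ_{x,u} - 1} ⊆ ℕ` of the derived sequence. -/
def derivedAlphabet (x : ℕ → A) (u : List A) : Set ℕ :=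
  Set.range (derivedSeq x u)

/-- The morphism `Θ_{x,u}` on letters: the return word labelled `k`. -/
noncomputable def thetaLetter (x : ℕ → A) (u : List A) (k : ℕ) : List A :=
  retWord x u (sInf {n | derivedSeq x u n = k})

/-- The canonical extension of a letter-to-word map to a monoid morphism on words. -/
def apply (f : A → List B) (w : List A) : List B :=
  (w.map f).flatten

/-- The morphism `Θ_{x,u} : R_{x,u}* → A*` on words. -/
noncomputable def theta (x : ℕ → A) (u : List A) (l : List ℕ) : List A :=
  apply (thetaLetter x u) l

/-- `y = f(x)` for an infinite sequence `x`: the image under `f` of every prefix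
of `x` is a prefix of `y`. -/
def SeqImage (f : A → List B) (x : ℕ → A) (y : ℕ → B) : Prop :=
  ∀ n, IsPrefixSeq y (apply f (factorAt x 0 n))

/-- The iterate `σⁿ` of a substitution, on letters. -/
def substIter (σ : A → List A) : ℕ → A → List A
  | 0 => fun a => [a]
  | n + 1 => fun a => apply σ (substIter σ n a)

/-- `σ` is prolongable on the letter `a`: `σ(a) = a·w` with `w` nonempty, and
`|σⁿ(a)| → ∞`. -/
def Prolongable (σ : A → List A) (a : A) : Prop :=
  (∃ w : List A, w ≠ [] ∧ σ a = a :: w) ∧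
    Filter.Tendsto (fun n => (substIter σ n a).length) Filter.atTop Filter.atTop

/-- The incidence matrix of a substitution: entry `(i, j)` is the number of
occurrences of the letter `i` in `σ(j)`. -/
def incMatrix [Fintype A] [DecidableEq A] (σ : A → List A) : Matrix A A ℕ :=
  Matrix.of fun i j => (σ j).count i

/-- A substitution is primitive if some power of its incidence matrix has all
entries strictly positive. -/
def Primitive [Fintype A] [DecidableEq A] (σ : A → List A) : Prop :=
  ∃ k, 0 < k ∧ ∀ i j, 0 < (incMatrix σ ^ k) i j

/-- The sequence `x` is (purely) periodic. -/
def IsPeriodic (x : ℕ → A) : Prop :=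
  ∃ p, 0 < p ∧ ∀ n, x (n + p) = x n

/-- The sequence `x` is ultimately periodic. -/
def IsUltimatelyPeriodic (x : ℕ → A) : Prop :=
  ∃ N p, 0 < p ∧ ∀ n, N ≤ n → x (n + p) = x n

/-- `|σ| = max_{a ∈ A} |σ(a)|`. -/
def mSize [Fintype A] (σ : A → List A) : ℕ :=
  Finset.univ.sup fun a => (σ a).length

/-- `min_{a ∈ A} |σ(a)|`. -/
noncomputable def minSize [Fintype A] [Nonempty A] (σ : A → List A) : ℕ :=
  Finset.univ.inf' Finset.univ_nonempty fun a => (σ a).length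

/-- `R_σ`: the maximal difference between two successive occurrences of a word of
length 2 in any fixed point of `σ`. -/
noncomputable def Rconst (σ : A → List A) : ℕ :=
  sSup {r | ∃ x : ℕ → A, SeqImage σ x x ∧
    ∃ w i j, w.length = 2 ∧ SuccessiveOccs x w i j ∧ r = j - i}

/-- `Q_σ = max( max_{0 ≤ n ≤ (d−1)d^d + 1} |σⁿ| / min_{a∈A} |σⁿ(a)| , |σ| )`. -/
noncomputable def Qconst [Fintype A] [Nonempty A] (σ : A → List A) : ℝ :=
  max
    ((Finset.range ((Fintype.card A - 1) * Fintype.card A ^ Fintype.card A + 2)).sup'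
      (Finset.nonempty_range_iff.mpr (by omega))
      fun n => (mSize (substIter σ n) : ℝ) / (minSize (substIter σ n) : ℝ))
    (mSize σ : ℝ)

/-- `K_σ = Q_σ · R_σ · |σ|`. -/
noncomputable def Kconst [Fintype A] [Nonempty A] (σ : A → List A) : ℝ :=
  Qconst σ * Rconst σ * mSize σ

/-- The index `m` such that `occSeq x u m = L`, i.e. the number of complete return
words to `u` composing the prefix of length `L` of `x`. -/
noncomputable def posIdx (x : ℕ → A) (u : List A) (L : ℕ) : ℕ :=
  sInf {m | occSeq x u m = L}

/-- The return substitution `σ_u : R_{x,u}* → R_{x,u}*`, on letters: it is the unique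
substitution satisfying `Θ_{x,u} ∘ σ_u = σ ∘ Θ_{x,u}`. -/
noncomputable def returnSubst (σ : A → List A) (x : ℕ → A) (u : List A) (k : ℕ) : List ℕ :=
  let n := sInf {n | derivedSeq x u n = k}
  let p := posIdx x u (apply σ (factorAt x 0 (occSeq x u n))).length
  let q := posIdx x u (apply σ (factorAt x 0 (occSeq x u (n + 1)))).length
  (List.range (q - p)).map fun t => derivedSeq x u (p + t)

/-- For a coding `φ`, the morphism `λ_u : R_{x,u}* → R_{φ(x),φ(u)}*`, on letters:
it is the unique morphism satisfying `φ ∘ Θ_{x,u} = Θ_{φ(x),φ(u)} ∘ λ_u`. -/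
noncomputable def lambdaMorph (φ : A → B) (x : ℕ → A) (u : List A) (k : ℕ) : List ℕ :=
  let n := sInf {n | derivedSeq x u n = k}
  let p := posIdx (fun i => φ (x i)) (u.map φ) (occSeq x u n)
  let q := posIdx (fun i => φ (x i)) (u.map φ) (occSeq x u (n + 1))
  (List.range (q - p)).map fun t => derivedSeq (fun i => φ (x i)) (u.map φ) (p + t)

/-- The Parikh vector (abelianization) of a word. -/
def parikh [DecidableEq A] (w : List A) : A → ℤ :=
  fun b => (w.count b : ℤ)


/-! ### Factors, morphisms and positions -/

theorem factorAt_length (x : ℕ → A) (i n : ℕ) : (factorAt x i n).length = n := by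
  simp [factorAt]

theorem factorAt_add (x : ℕ → A) (i m n : ℕ) :
    factorAt x i (m + n) = factorAt x i m ++ factorAt x (i + m) n := by
  simp [factorAt, List.range_add, Function.comp_def, add_assoc]

theorem factorAt_one (x : ℕ → A) (i : ℕ) : factorAt x i 1 = [x i] := by
  simp [factorAt]

theorem factorAt_eq_iff (x z : ℕ → A) (i j n : ℕ) :
    factorAt x i n = factorAt z j n ↔ ∀ r < n, x (i + r) = z (j + r) := by
  simp [factorAt]

theorem factorAt_inj {x z : ℕ → A} {i j m n : ℕ} (h : factorAt x i m = factorAt z j n) :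
    m = n := by
  simpa [factorAt_length] using congrArg List.length h

theorem apply_append (f : A → List B) (v w : List A) :
    apply f (v ++ w) = apply f v ++ apply f w := by
  simp [apply]

theorem iter_append (σ : A → List A) (n : ℕ) (v w : List A) :
    (apply σ)^[n] (v ++ w) = (apply σ)^[n] v ++ (apply σ)^[n] w := by
  induction n with
  | zero => rfl
  | succ n ih => simp only [Function.iterate_succ_apply', ih, apply_append]

theorem iter_nil (σ : A → List A) (n : ℕ) : (apply σ)^[n] [] = [] := by
  induction n with
  | zero => rfl
  | succ n ih => rw [Function.iterate_succ_apply', ih]; rfl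

/-- The length of `σ^n(b)`. -/
def len (σ : A → List A) (n : ℕ) (b : A) : ℕ := ((apply σ)^[n] [b]).length

/-- The position map of `σ` along `x`: the length of the image under `σ` of the prefix of
length `i`. When `σ` fixes `x`, the images of the letters of `x` begin in `x` at these
positions, and the `n`-th iterate of this map is the position map of `σ^n`. -/
def pos (σ : A → List A) (x : ℕ → A) (i : ℕ) : ℕ := (apply σ (factorAt x 0 i)).length

section
variable {σ : A → List A} {x : ℕ → A}

theorem iter_prefix (hfix : SeqImage σ x x) (n i : ℕ) :
    (apply σ)^[n] (factorAt x 0 i) = factorAt x 0 ((pos σ x)^[n] i) := by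
  induction n with
  | zero => rfl
  | succ n ih =>
    rw [Function.iterate_succ_apply', Function.iterate_succ_apply', ih]
    exact (hfix _).symm

/-- `σ^n` maps the factor of `x` at position `i` to the factor at the image position. -/
theorem iter_factor (hfix : SeqImage σ x x) (n i d : ℕ) :
    (pos σ x)^[n] (i + d)
        = (pos σ x)^[n] i + ((apply σ)^[n] (factorAt x i d)).length ∧
      (apply σ)^[n] (factorAt x i d) = factorAt x ((pos σ x)^[n] i)
        ((pos σ x)^[n] (i + d) - (pos σ x)^[n] i) := by
  have h := iter_prefix hfix n (i + d)
  rw [factorAt_add, iter_append, iter_prefix hfix, zero_add] at h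
  have hl := congrArg List.length h
  simp only [List.length_append, factorAt_length] at hl
  refine ⟨hl.symm, ?_⟩
  rw [← hl, factorAt_add, zero_add] at h
  rw [← hl, Nat.add_sub_cancel_left]
  exact List.append_cancel_left h

theorem iter_pos_succ (hfix : SeqImage σ x x) (n i : ℕ) :
    (pos σ x)^[n] (i + 1) = (pos σ x)^[n] i + len σ n (x i) := by
  rw [(iter_factor hfix n i 1).1, factorAt_one]; rfl

theorem iter_pos_zero (n : ℕ) : (pos σ x)^[n] 0 = 0 :=
  Function.iterate_fixed (by simp [pos, factorAt, apply]) n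

theorem iter_pos_one (hfix : SeqImage σ x x) (n : ℕ) :
    (pos σ x)^[n] 1 = len σ n (x 0) := by
  have := iter_pos_succ hfix n 0
  rwa [iter_pos_zero, zero_add, zero_add] at this

/-- Equal factors of `x` have equal images, read in `x` at the corresponding positions. -/
theorem iter_transfer (hfix : SeqImage σ x x) (n : ℕ) {i j d : ℕ}
    (h : ∀ r < d, x (i + r) = x (j + r)) (r : ℕ)
    (hr : (pos σ x)^[n] i + r < (pos σ x)^[n] (i + d)) :
    x ((pos σ x)^[n] i + r) = x ((pos σ x)^[n] j + r) := by
  obtain ⟨h1, h2⟩ := iter_factor hfix n i d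
  obtain ⟨h3, h4⟩ := iter_factor hfix n j d
  rw [← (factorAt_eq_iff x x i j d).2 h] at h3 h4
  have h5 := h2.symm.trans h4
  have h6 := factorAt_inj h5
  rw [← h6] at h5
  exact (factorAt_eq_iff _ _ _ _ _).1 h5 r (by omega)

end

/-! ### Growth of primitive substitutions -/

/-- The incidence matrix of `σ` acts on letter counts. -/
theorem count_apply [Fintype A] [DecidableEq A] (σ : A → List A) (i : A) (w : List A) :
    (apply σ w).count i = ∑ c, incMatrix σ i c * w.count c := by
  induction w with
  | nil => simp [apply]
  | cons b w ih =>
    have : apply σ (b :: w) = σ b ++ apply σ w := by simp [apply]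
    rw [this, List.count_append, ih]
    simp only [List.count_cons, mul_add, Finset.sum_add_distrib]
    simp [incMatrix, add_comm]

theorem count_iter [Fintype A] [DecidableEq A] (σ : A → List A) (k : ℕ) (i j : A) :
    ((apply σ)^[k] [j]).count i = (incMatrix σ ^ k) i j := by
  induction k generalizing i with
  | zero =>
    rw [Function.iterate_zero_apply, pow_zero, Matrix.one_apply, List.count_singleton]
    by_cases h : i = j
    · simp [h]
    · simp [h, Ne.symm h]
  | succ k ih =>
    rw [Function.iterate_succ_apply', count_apply, pow_succ', Matrix.mul_apply]
    simp [ih]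

theorem exists_mem_iter [Fintype A] [DecidableEq A] {σ : A → List A} (h : Primitive σ) :
    ∃ k, 0 < k ∧ ∀ b c : A, c ∈ (apply σ)^[k] [b] := by
  obtain ⟨k, hk, h⟩ := h
  refine ⟨k, hk, fun b c => ?_⟩
  rw [← List.count_pos_iff, count_iter]
  exact h c b

theorem len_le_of_mem (σ : A → List A) (n : ℕ) {c : A} {w : List A} (h : c ∈ w) :
    len σ n c ≤ ((apply σ)^[n] w).length := by
  obtain ⟨s, t, rfl⟩ := List.append_of_mem h
  have : s ++ c :: t = s ++ ([c] ++ t) := rfl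
  rw [this, iter_append, iter_append]
  simp only [List.length_append, len]
  omega

/-- If every `σ^n(c)` has length at least `q`, then `σ^n(w)` has length at least `q * |w|`. -/
theorem mul_length_le (σ : A → List A) (n q : ℕ) (h : ∀ c, q ≤ len σ n c) (w : List A) :
    q * w.length ≤ ((apply σ)^[n] w).length := by
  induction w with
  | nil => simp
  | cons c w ih =>
    have : c :: w = [c] ++ w := rfl
    rw [this, iter_append, List.length_append, List.length_append, mul_add]
    have := h c
    simp only [len] at this
    simp only [List.length_singleton]
    omega

theorem length_iter_le (σ : A → List A) (B : ℕ) (hB : ∀ c, (σ c).length ≤ B) (j : ℕ)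
    (w : List A) : ((apply σ)^[j] w).length ≤ B ^ j * w.length := by
  have h1 : ∀ w : List A, (apply σ w).length ≤ B * w.length := by
    intro w
    induction w with
    | nil => simp [apply]
    | cons c w ih =>
      have : apply σ (c :: w) = σ c ++ apply σ w := by simp [apply]
      rw [this, List.length_append, List.length_cons, mul_add]
      have := hB c
      omega
  induction j with
  | zero => simp
  | succ j ih =>
    rw [Function.iterate_succ_apply', pow_succ', mul_assoc]
    exact (h1 _).trans (Nat.mul_le_mul_left _ ih)

theorem iter_add_apply (σ : A → List A) (n m : ℕ) (w : List A) :
    (apply σ)^[n + m] w = (apply σ)^[n] ((apply σ)^[m] w) :=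
  Function.iterate_add_apply _ n m w

/-- The growth properties of a primitive substitution `σ` prolongable on `a` that are used
below, where every letter has an image of length at most `B` and every letter occurs in every
`σ^k(b)`. -/
structure Growth (σ : A → List A) (a : A) (B k : ℕ) : Prop where
  one_le : 1 ≤ B
  pos : ∀ n b, 0 < len σ n b
  le_pow : ∀ n j b, len σ (n + j) b ≤ B ^ j * len σ n b
  le_shift : ∀ n b c, len σ n c ≤ len σ (n + k) b
  lt_len : ∀ n, n < len σ n a
  mem : ∀ b, a ∈ (apply σ)^[k] [b]

theorem exists_growth [Fintype A] [DecidableEq A] {σ : A → List A} {a : A}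
    (h : Primitive σ) (ha : Prolongable σ a) : ∃ B k, Growth σ a B k := by
  obtain ⟨k, hk, hmem⟩ := exists_mem_iter h
  obtain ⟨⟨w, hw, hσa⟩, -⟩ := ha
  have hne : ∀ c, σ c ≠ [] := by
    intro c hc
    obtain ⟨k, rfl⟩ := Nat.exists_eq_add_of_lt hk
    have := hmem c c
    rw [zero_add, Function.iterate_succ_apply] at this
    have h0 : apply σ [c] = [] := by simp [apply, hc]
    rw [h0, iter_nil] at this
    simp at this
  have hpos : ∀ n b, 0 < len σ n b := by
    intro n b
    induction n with
    | zero => simp [len]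
    | succ n ih =>
      obtain ⟨c, hc⟩ := List.exists_mem_of_length_pos ih
      have := len_le_of_mem σ 1 hc
      rw [← iter_add_apply, add_comm] at this
      refine lt_of_lt_of_le ?_ this
      simpa [len, apply] using List.length_pos_iff.2 (hne c)
  refine ⟨mSize σ + 1, k, by omega, hpos, ?_, ?_, ?_, fun b => hmem b a⟩
  · intro n j b
    rw [len, add_comm, iter_add_apply]
    exact length_iter_le σ _ (fun c => (Finset.le_sup (f := fun c => (σ c).length)
      (Finset.mem_univ c)).trans (Nat.le_succ _)) j _
  · intro n b c
    rw [len, len, iter_add_apply]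
    exact len_le_of_mem σ n (hmem b c)
  · intro n
    induction n with
    | zero => simp [len]
    | succ n ih =>
      have h1 : apply σ [a] = [a] ++ w := by simp [apply, hσa]
      have h2 := mul_length_le σ n 1 (hpos n) w
      have h3 := List.length_pos_iff.2 hw
      simp only [len] at ih ⊢
      rw [Function.iterate_succ_apply, h1, iter_append, List.length_append]
      omega

namespace Growth
variable {σ : A → List A} {x : ℕ → A} {a : A} {B k : ℕ}

theorem le_mul (g : Growth σ a B k) (n : ℕ) (b c : A) : len σ n c ≤ B ^ k * len σ n b :=
  (g.le_shift n b c).trans (g.le_pow n k b)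

theorem strictMono (g : Growth σ a B k) (hfix : SeqImage σ x x) (n : ℕ) :
    StrictMono (Rauzy.pos σ x)^[n] :=
  strictMono_nat_of_lt_succ fun i => by
    rw [iter_pos_succ hfix]; have := g.pos n (x i); omega

theorem frequently (g : Growth σ a B k) (hfix : SeqImage σ x x) (t : ℕ) :
    ∃ e, t ≤ e ∧ x e = a := by
  have h := g.mem (x t)
  rw [← factorAt_one x t, (iter_factor hfix k t 1).2] at h
  simp only [factorAt, List.mem_map] at h
  obtain ⟨r, -, hr⟩ := h
  exact ⟨_, ((g.strictMono hfix k).le_apply).trans (Nat.le_add_right _ _), hr⟩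

end Growth

namespace Growth
variable {σ : A → List A} {x : ℕ → A} {a : A} {B k : ℕ}

/-- Every scale `p` is met, up to the factor `B`, by the length of some `σ^m(a)`. -/
theorem exists_level (g : Growth σ a B k) {p : ℕ} (hp : 0 < p) :
    ∃ m, p ≤ len σ m a ∧ len σ m a ≤ B * p := by
  classical
  have hex : ∃ m, p ≤ len σ m a := ⟨p, (g.lt_len p).le⟩
  refine ⟨Nat.find hex, Nat.find_spec hex, ?_⟩
  rcases hm : Nat.find hex with _ | m
  · have := Nat.mul_pos g.one_le hp
    simp only [len, Function.iterate_zero, id, List.length_singleton]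
    omega
  · have h1 : len σ m a < p := not_le.1 (Nat.find_min hex (by omega))
    have h2 := g.le_pow m 1 a
    rw [pow_one] at h2
    exact h2.trans (Nat.mul_le_mul_left _ h1.le)

end Growth

/-! ### Occurrences of prefixes of an aperiodic fixed point -/

/-- The prefix of `x` of length `ℓ` occurs in `x` at position `q`. -/
def Occ (x : ℕ → A) (ℓ q : ℕ) : Prop := ∀ r < ℓ, x (q + r) = x r

open Classical in
/-- The number of `s < n` such that `p s`. -/
noncomputable def cnt (p : ℕ → Prop) (n : ℕ) : ℕ := Nat.count p n

theorem cnt_zero (p : ℕ → Prop) : cnt p 0 = 0 := by simp [cnt]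

open Classical in
theorem cnt_succ (p : ℕ → Prop) (n : ℕ) : cnt p (n + 1) = cnt p n + if p n then 1 else 0 :=
  Nat.count_succ p n

theorem cnt_add (p : ℕ → Prop) (m n : ℕ) :
    cnt p (m + n) = cnt p m + cnt (fun s => p (m + s)) n := by
  classical
  simp only [cnt]
  convert Nat.count_add p m n

theorem cnt_mono (p : ℕ → Prop) {m n : ℕ} (h : m ≤ n) : cnt p m ≤ cnt p n := by
  classical
  exact Nat.count_monotone p h

theorem cnt_congr {p q : ℕ → Prop} {n : ℕ} (h : ∀ s < n, (p s ↔ q s)) : cnt p n = cnt q n := by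
  classical
  induction n with
  | zero => simp [cnt_zero]
  | succ n ih =>
    rw [cnt_succ, cnt_succ, ih fun s hs => h s (by omega)]
    congr 1
    exact if_congr (h n (by omega)) rfl rfl

theorem cnt_inj {p : ℕ → Prop} {m n : ℕ} (hm : p m) (hn : p n) (h : cnt p m = cnt p n) :
    m = n := by
  classical
  exact Nat.count_injective hm hn h

/-- If a strictly increasing map sends `p` into `p'` and arbitrarily far out respects the
counts of the two sets, then it respects them everywhere, so it maps the `n`-th element of
`p` to the `n`-th element of `p'`: an element of `p'` missed by the map would create an
excess of `p'` that never disappears. -/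
theorem cnt_map {K : ℕ → ℕ} (hK : StrictMono K) {p p' : ℕ → Prop}
    (hmap : ∀ q, p q → p' (K q)) (hz : ∀ t, ∃ z, t ≤ z ∧ cnt p z = cnt p' (K z)) (q : ℕ) :
    cnt p' (K q) = cnt p q := by
  have key : ∀ q d, cnt p (q + d) + cnt p' (K q) ≤ cnt p' (K (q + d)) + cnt p q := by
    intro q d
    induction d with
    | zero => simp [add_comm]
    | succ d ih =>
      have h1 := cnt_mono p' (hK (Nat.lt_succ_self (q + d)))
      rw [cnt_succ] at h1
      rw [← add_assoc, cnt_succ]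
      have h2 := hmap (q + d)
      by_cases h : p (q + d)
      · simp only [h, h2 h, if_true, Nat.succ_eq_add_one] at h1 ⊢
        omega
      · simp only [h, if_false, Nat.succ_eq_add_one] at h1 ⊢
        omega
  obtain ⟨z, hz1, hz2⟩ := hz q
  obtain ⟨d, rfl⟩ := Nat.exists_eq_add_of_le hz1
  have h1 := key q d
  have h2 := key 0 q
  simp only [zero_add, cnt_zero] at h2
  omega

/-- Every two-letter factor of `x` occurs in a fixed prefix of `x`. -/
theorem exists_window [Finite A] (x : ℕ → A) :
    ∃ N, ∀ i, ∃ j < N, x i = x j ∧ x (i + 1) = x (j + 1) := by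
  classical
  let f : ℕ → A × A := fun i => (x i, x (i + 1))
  have hfin : (Set.range f).Finite := Set.toFinite _
  obtain ⟨N, hN⟩ := (hfin.image (fun c => sInf {i | f i = c})).bddAbove
  refine ⟨N + 1, fun i => ⟨sInf {j | f j = f i}, ?_, ?_⟩⟩
  · exact Nat.lt_succ_of_le (hN ⟨f i, ⟨i, rfl⟩, rfl⟩)
  · have : f (sInf {j | f j = f i}) = f i := Nat.sInf_mem (s := {j | f j = f i}) ⟨i, rfl⟩
    exact ⟨(congrArg Prod.fst this).symm, (congrArg Prod.snd this).symm⟩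

theorem pair_agree {x : ℕ → A} {i j : ℕ} (h0 : x i = x j) (h1 : x (i + 1) = x (j + 1)) :
    ∀ r < 2, x (i + r) = x (j + r) := by
  intro r hr
  interval_cases r
  · exact h0
  · exact h1

theorem exists_block {F : ℕ → ℕ} (hF : StrictMono F) (h0 : F 0 = 0) (q : ℕ) :
    ∃ i, F i ≤ q ∧ q < F (i + 1) := by
  classical
  have hex : ∃ i, q < F i := ⟨q + 1, lt_of_lt_of_le (Nat.lt_succ_self q) hF.le_apply⟩
  rcases hm : Nat.find hex with _ | m
  · have := Nat.find_spec hex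
    rw [hm, h0] at this
    omega
  · refine ⟨m, not_lt.1 (Nat.find_min hex (by omega)), ?_⟩
    rw [← hm]; exact Nat.find_spec hex

section
variable {σ : A → List A} {x : ℕ → A} {a : A} {B k : ℕ}

/-- Return words to a prefix of length `ℓ` of an aperiodic fixed point have length at least
`ℓ / K`, with `K` independent of `ℓ`. Otherwise a long prefix of `x` has a small period `p`.
For a level `n` at which all `σ^n(b)` have length at least `p` but comparable with `p`, that
prefix contains the images under `σ^n` of all two-letter factors of `x`. Every window of
length `p + 1` in `x` lies in such an image, so `p` is a period of `x`. -/
theorem exists_gap [Finite A] (g : Growth σ a B k) (hfix : SeqImage σ x x)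
    (hnp : ¬ IsUltimatelyPeriodic x) :
    ∃ K, ∀ ℓ i j, i < j → Occ x ℓ i → Occ x ℓ j → ℓ ≤ K * (j - i) := by
  obtain ⟨N, hN⟩ := exists_window x
  refine ⟨(N + 1) * (B ^ k * (B ^ k * B)), fun ℓ i j hij hi hj => ?_⟩
  by_contra! hlt
  obtain ⟨p, hp, rfl⟩ : ∃ p, 0 < p ∧ j = i + p := ⟨j - i, by omega, by omega⟩
  rw [Nat.add_sub_cancel_left] at hlt
  have hper : ∀ r, r + p < ℓ → x (r + p) = x r := by
    intro r hr
    rw [← hi (r + p) hr, ← hj r (by omega)]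
    congr 1; omega
  obtain ⟨m, hm1, hm2⟩ := g.exists_level hp
  have hlow : ∀ b, p ≤ len σ (m + k) b := fun b => hm1.trans (g.le_shift m b a)
  have hup : ∀ b, len σ (m + k) b ≤ B ^ k * (B ^ k * B) * p := by
    intro b
    refine (g.le_pow m k b).trans ?_
    rw [mul_assoc]
    refine Nat.mul_le_mul_left _ ((g.le_mul m a b).trans ?_)
    rw [mul_assoc]
    exact Nat.mul_le_mul_left _ hm2
  have hpos : ∀ n, (pos σ x)^[m + k] n ≤ n * (B ^ k * (B ^ k * B) * p) := by
    intro n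
    induction n with
    | zero => rw [iter_pos_zero]; omega
    | succ n ih =>
      rw [iter_pos_succ hfix, add_mul, one_mul]
      exact Nat.add_le_add ih (hup _)
  refine hnp ⟨0, p, hp, fun q _ => ?_⟩
  obtain ⟨e, he1, he2⟩ := exists_block (g.strictMono hfix (m + k)) (iter_pos_zero _) q
  obtain ⟨e', he', h0, h1⟩ := hN e
  have ht := iter_transfer hfix (m + k) (pair_agree h0 h1)
  have hs := iter_pos_succ hfix (m + k) (e + 1)
  have hl := hlow (x (e + 1))
  have hs' := iter_pos_succ hfix (m + k) e
  have hs2 := iter_pos_succ hfix (m + k) e'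
  have hs3 := iter_pos_succ hfix (m + k) (e' + 1)
  rw [← h0] at hs2
  rw [← h1] at hs3
  have hmono := (g.strictMono hfix (m + k)).monotone (show e' + 1 + 1 ≤ N + 1 by omega)
  have hbig := hpos (N + 1)
  rw [← mul_assoc] at hbig
  obtain ⟨r, rfl⟩ := Nat.exists_eq_add_of_le he1
  have e1 := ht r (by rw [show e + 2 = e + 1 + 1 from rfl]; omega)
  have e2 := ht (r + p) (by rw [show e + 2 = e + 1 + 1 from rfl]; omega)
  rw [add_assoc, e1, e2, ← add_assoc]
  apply hper
  omega

/-- A window of length at most `C * ℓ` contains boundedly many occurrences of the prefix of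
length `ℓ`, since `s ↦ K * s / ℓ` separates them. -/
theorem cnt_le {K C ℓ z d : ℕ}
    (hgap : ∀ ℓ i j, i < j → Occ x ℓ i → Occ x ℓ j → ℓ ≤ K * (j - i)) (hℓ : 0 < ℓ)
    (hd : d ≤ C * ℓ) : cnt (fun s => Occ x ℓ (z + s)) d ≤ K * C + 1 := by
  classical
  have h1 : cnt (fun s => Occ x ℓ (z + s)) d
      = ((Finset.range d).filter fun s => Occ x ℓ (z + s)).card := by
    simp only [cnt]
    convert Nat.count_eq_card_filter_range (fun s => Occ x ℓ (z + s)) d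
  rw [h1, ← Finset.card_range (K * C + 1)]
  have hlt : ∀ s t, s < t → Occ x ℓ (z + s) → Occ x ℓ (z + t) → K * s / ℓ < K * t / ℓ := by
    intro s t hst hs ht
    have := hgap ℓ _ _ (show z + s < z + t by omega) hs ht
    obtain ⟨e, rfl⟩ := Nat.exists_eq_add_of_lt hst
    rw [show z + (s + e + 1) - (z + s) = e + 1 by omega] at this
    refine Nat.lt_of_succ_le ((Nat.le_div_iff_mul_le hℓ).2 ?_)
    have h2 := Nat.div_mul_le_self (K * s) ℓ
    rw [Nat.succ_mul, add_assoc, mul_add]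
    omega
  refine Finset.card_le_card_of_injOn (fun s => K * s / ℓ) ?_ ?_
  · intro s hs
    simp only [Finset.coe_filter, Finset.mem_range, Set.mem_ofPred_eq] at hs
    simp only [Finset.coe_range, Set.mem_Iio]
    refine Nat.lt_succ_of_le (Nat.div_le_of_le_mul ?_)
    calc K * s ≤ K * (C * ℓ) := Nat.mul_le_mul_left _ (by omega)
      _ = ℓ * (K * C) := by ring
  · intro s hs t ht hst
    simp only [Finset.coe_filter, Finset.mem_range, Set.mem_ofPred_eq] at hs ht
    simp only at hst
    rcases lt_trichotomy s t with h | h | h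
    · have := hlt s t h hs.2 ht.2; omega
    · exact h
    · have := hlt t s h ht.2 hs.2; omega

/-- If all blocks are at least `ℓ` long, an occurrence that begins in a block ends before the
end of the next one, so it is decided by the two letters the blocks come from. -/
theorem block_congr (hfix : SeqImage σ x x) {n ℓ i j : ℕ} (hℓ : ∀ b, ℓ ≤ len σ n b)
    (h0 : x i = x j) (h1 : x (i + 1) = x (j + 1)) (δ : ℕ) (hδ : δ < len σ n (x i)) :
    Occ x ℓ ((pos σ x)^[n] i + δ) ↔ Occ x ℓ ((pos σ x)^[n] j + δ) := by
  have ht := iter_transfer hfix n (pair_agree h0 h1)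
  have hs := iter_pos_succ hfix n (i + 1)
  have hs' := iter_pos_succ hfix n i
  have hl := hℓ (x (i + 1))
  refine forall₂_congr fun r hr => ?_
  rw [add_assoc, ht (δ + r) (by rw [show i + 2 = i + 1 + 1 from rfl]; omega), ← add_assoc]

/-- The number of occurrences of the prefix of length `ℓ` inside the block of `x` formed by
the image under `σ^n` of the `i`-th letter. -/
noncomputable def blockCnt (σ : A → List A) (x : ℕ → A) (n ℓ i : ℕ) : ℕ :=
  cnt (fun s => Occ x ℓ ((pos σ x)^[n] i + s)) (len σ n (x i))

theorem blockCnt_congr (hfix : SeqImage σ x x) {n ℓ i j : ℕ} (hℓ : ∀ b, ℓ ≤ len σ n b)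
    (h0 : x i = x j) (h1 : x (i + 1) = x (j + 1)) :
    blockCnt σ x n ℓ i = blockCnt σ x n ℓ j := by
  rw [blockCnt, blockCnt, ← h0]
  exact cnt_congr (block_congr hfix hℓ h0 h1)

/-- Two levels with the same block counts on a window containing all two-letter factors have
the same counts up to every block boundary. -/
theorem cnt_iter_pos_eq (hfix : SeqImage σ x x) {N : ℕ}
    (hN : ∀ i, ∃ j < N, x i = x j ∧ x (i + 1) = x (j + 1)) {n ℓ n' ℓ' : ℕ}
    (hℓ : ∀ b, ℓ ≤ len σ n b) (hℓ' : ∀ b, ℓ' ≤ len σ n' b)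
    (h : ∀ j < N, blockCnt σ x n ℓ j = blockCnt σ x n' ℓ' j) (i : ℕ) :
    cnt (Occ x ℓ) ((pos σ x)^[n] i) = cnt (Occ x ℓ') ((pos σ x)^[n'] i) := by
  induction i with
  | zero => simp [iter_pos_zero, cnt_zero]
  | succ i ih =>
    obtain ⟨j, hj, h0, h1⟩ := hN i
    rw [iter_pos_succ hfix, iter_pos_succ hfix, cnt_add, cnt_add, ih]
    congr 1
    exact (blockCnt_congr hfix hℓ h0 h1).trans
      ((h j hj).trans (blockCnt_congr hfix hℓ' h0 h1).symm)

/-- The ranks, among the occurrences of the prefix of length `p` in the `i`-th block of level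
`n`, of the occurrences of the prefix of length `P`. -/
def pattern (σ : A → List A) (x : ℕ → A) (n p P i : ℕ) : Set ℕ :=
  {r | ∃ δ < len σ n (x i), Occ x P ((pos σ x)^[n] i + δ) ∧
    cnt (fun s => Occ x p ((pos σ x)^[n] i + s)) δ = r}

theorem pattern_congr (hfix : SeqImage σ x x) {n p P i j : ℕ} (hp : ∀ b, p ≤ len σ n b)
    (hP : ∀ b, P ≤ len σ n b) (h0 : x i = x j) (h1 : x (i + 1) = x (j + 1)) :
    pattern σ x n p P i = pattern σ x n p P j := by
  ext r
  simp only [pattern, Set.mem_ofPred_eq, ← h0]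
  refine exists_congr fun δ => and_congr_right fun hδ => ?_
  rw [block_congr hfix hP h0 h1 δ hδ,
    cnt_congr fun s hs => block_congr hfix hp h0 h1 s (hs.trans hδ)]

theorem occ_map (hfix : SeqImage σ x x) {n ℓ ℓ' q : ℕ} (h : Occ x ℓ q)
    (hℓ : ℓ' ≤ (pos σ x)^[n] ℓ) : Occ x ℓ' ((pos σ x)^[n] q) := by
  intro r hr
  have := iter_transfer hfix n (i := 0) (j := q) (d := ℓ)
    (fun s hs => by rw [zero_add]; exact (h s hs).symm) r
    (by rw [iter_pos_zero, zero_add, zero_add]; omega)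
  rw [← this, iter_pos_zero, zero_add]

end

/-! ### Two substitutions with the same fixed point -/

section
variable {σ τ : A → List A} {x : ℕ → A} {a : A} {B k B' k' : ℕ}

theorem ofNat_inj {M v w : ℕ} (hv : v ≤ M) (hw : w ≤ M)
    (h : Fin.ofNat (M + 1) v = Fin.ofNat (M + 1) w) : v = w := by
  have := congrArg Fin.val h
  simpa [Fin.val_ofNat, Nat.mod_eq_of_lt (Nat.lt_succ_of_le hv),
    Nat.mod_eq_of_lt (Nat.lt_succ_of_le hw)] using this

/-- There is a prefix length `P > 0` such that the position maps of some powers of `σ` and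
`τ` agree at every occurrence in `x` of the prefix of length `P`. -/
theorem exists_powers_agree [Finite A] (g : Growth σ a B k) (g' : Growth τ a B' k')
    (hx0 : x 0 = a) (hσ : SeqImage σ x x) (hτ : SeqImage τ x x)
    (hnp : ¬ IsUltimatelyPeriodic x) :
    ∃ P, 0 < P ∧ ∃ i j, 0 < i ∧ 0 < j ∧
      ∀ q, Occ x P q → (pos τ x)^[i] q = (pos σ x)^[j] q := by
  classical
  obtain ⟨K, hK⟩ := exists_gap g hσ hnp
  obtain ⟨N, hN⟩ := exists_window x
  -- `p t` and `P t` are the lengths of `σ^t(a)` and `τ^(μ t)(a)`, which are comparable.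
  choose μ hμ1 hμ2 using fun t => g'.exists_level (g.pos t a)
  set p : ℕ → ℕ := fun t => len σ t a with hp
  set P : ℕ → ℕ := fun t => len τ (μ t) a with hP
  have hpP : ∀ t, p t ≤ P t := hμ1
  have hPp : ∀ t, P t ≤ B' * p t := hμ2
  have hp0 : ∀ t, 0 < p t := fun t => g.pos t a
  -- At the levels `t + k + (B' + k)` and `μ t + k'` all blocks are at least `P t` long.
  have hlowσ : ∀ t b, P t ≤ len σ (t + k + (B' + k)) b := by
    intro t b
    refine (hPp t).trans ?_
    have h1 := mul_length_le σ (t + k) (p t) (fun c => g.le_shift t c a)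
      ((apply σ)^[B' + k] [b])
    have h2 : B' ≤ len σ (B' + k) b := (g.lt_len B').le.trans (g.le_shift B' b a)
    rw [← iter_add_apply, mul_comm] at h1
    exact (Nat.mul_le_mul_right _ h2).trans h1
  have hlowσp : ∀ t b, p t ≤ len σ (t + k + (B' + k)) b :=
    fun t b => (hpP t).trans (hlowσ t b)
  have hlowτ : ∀ t b, P t ≤ len τ (μ t + k') b := fun t b => g'.le_shift _ b a
  obtain ⟨C, hC⟩ : ∃ C, C = B ^ (k + (B' + k)) * B ^ k + B' ^ k' * B' ^ k' := ⟨_, rfl⟩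
  have hupσ : ∀ t b, len σ (t + k + (B' + k)) b ≤ C * p t := by
    intro t b
    rw [add_assoc]
    refine (g.le_pow t _ b).trans ((Nat.mul_le_mul_left _ (g.le_mul t a b)).trans ?_)
    rw [← mul_assoc, hC]
    exact Nat.mul_le_mul_right _ (Nat.le_add_right _ _)
  have hupσP : ∀ t b, len σ (t + k + (B' + k)) b ≤ C * P t :=
    fun t b => (hupσ t b).trans (Nat.mul_le_mul_left _ (hpP t))
  have hupτ : ∀ t b, len τ (μ t + k') b ≤ C * P t := by
    intro t b
    refine (g'.le_pow _ _ b).trans ((Nat.mul_le_mul_left _ (g'.le_mul _ a b)).trans ?_)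
    rw [← mul_assoc, hC]
    exact Nat.mul_le_mul_right _ (Nat.le_add_left _ _)
  set M := K * C + 1 with hM
  have hb1 : ∀ t i, blockCnt σ x (t + k + (B' + k)) (p t) i ≤ M :=
    fun t i => cnt_le hK (hp0 t) (hupσ t _)
  have hb2 : ∀ t i, blockCnt σ x (t + k + (B' + k)) (P t) i ≤ M :=
    fun t i => cnt_le hK ((hp0 t).trans_le (hpP t)) (hupσP t _)
  have hb3 : ∀ t i, blockCnt τ x (μ t + k') (P t) i ≤ M :=
    fun t i => cnt_le hK ((hp0 t).trans_le (hpP t)) (hupτ t _)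
  -- The bounded combinatorial data of level `t`, in which some infinite set of levels agrees.
  let D : ℕ → Fin N → Fin (M + 1) × Fin (M + 1) × Fin (M + 1) × Set (Fin (M + 1)) :=
    fun t i => (Fin.ofNat (M + 1) (blockCnt σ x (t + k + (B' + k)) (p t) i),
      Fin.ofNat (M + 1) (blockCnt σ x (t + k + (B' + k)) (P t) i),
      Fin.ofNat (M + 1) (blockCnt τ x (μ t + k') (P t) i),
      {r | (r : ℕ) ∈ pattern σ x (t + k + (B' + k)) (p t) (P t) i})
  obtain ⟨c, hc⟩ := Finite.exists_infinite_fiber D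
  have hc : (D ⁻¹' {c}).Infinite := Set.infinite_coe_iff.1 hc
  obtain ⟨t, ht⟩ := hc.nonempty
  obtain ⟨t', ht', htt⟩ := hc.exists_gt (max t (P t))
  have hD : D t = D t' := by
    rw [Set.mem_preimage, Set.mem_singleton_iff] at ht ht'
    rw [ht, ht']
  have hlt : t < t' := (le_max_left _ _).trans_lt htt
  have hPP : P t < P t' :=
    ((le_max_right _ _).trans_lt htt).trans ((g.lt_len t').trans_le (hpP t'))
  have hμlt : μ t < μ t' := by
    by_contra! hle
    obtain ⟨d, hd⟩ := Nat.exists_eq_add_of_le hle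
    have hmono : ∀ d, len τ (μ t') a ≤ len τ (μ t' + d) a := by
      intro d
      rw [← hx0, ← iter_pos_one hτ, ← iter_pos_one hτ, Function.iterate_add_apply]
      refine (g'.strictMono hτ (μ t')).monotone ?_
      exact (g'.strictMono hτ d).le_apply
    have := hmono d
    rw [← hd] at this
    exact absurd hPP (not_lt.2 this)
  have hd1 : ∀ j < N, blockCnt σ x (t + k + (B' + k)) (p t) j
      = blockCnt σ x (t' + k + (B' + k)) (p t') j := fun j hj =>
    ofNat_inj (hb1 _ _) (hb1 _ _) (congrArg Prod.fst (congrFun hD ⟨j, hj⟩))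
  have hd2 : ∀ j < N, blockCnt σ x (t + k + (B' + k)) (P t) j
      = blockCnt σ x (t' + k + (B' + k)) (P t') j := fun j hj =>
    ofNat_inj (hb2 _ _) (hb2 _ _) (congrArg (fun z => z.2.1) (congrFun hD ⟨j, hj⟩))
  have hd3 : ∀ j < N, blockCnt τ x (μ t + k') (P t) j
      = blockCnt τ x (μ t' + k') (P t') j := fun j hj =>
    ofNat_inj (hb3 _ _) (hb3 _ _) (congrArg (fun z => z.2.2.1) (congrFun hD ⟨j, hj⟩))
  have hd4 : ∀ j < N, ∀ r ≤ M, r ∈ pattern σ x (t + k + (B' + k)) (p t) (P t) j →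
      r ∈ pattern σ x (t' + k + (B' + k)) (p t') (P t') j := by
    intro j hj r hr h
    have h1 := congrArg (fun z => z.2.2.2) (congrFun hD ⟨j, hj⟩)
    have h2 : (⟨r, Nat.lt_succ_of_le hr⟩ : Fin (M + 1)) ∈ (D t ⟨j, hj⟩).2.2.2 := h
    rw [h1] at h2
    exact h2
  have hc1 := cnt_iter_pos_eq hσ hN (hlowσp t) (hlowσp t') hd1
  have hc2 := cnt_iter_pos_eq hσ hN (hlowσ t) (hlowσ t') hd2
  have hc3 := cnt_iter_pos_eq hτ hN (hlowτ t) (hlowτ t') hd3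
  obtain ⟨d, hd⟩ := Nat.exists_eq_add_of_lt hlt
  obtain ⟨e, he⟩ := Nat.exists_eq_add_of_lt hμlt
  have hS : ∀ i, (pos σ x)^[d + 1] ((pos σ x)^[t + k + (B' + k)] i)
      = (pos σ x)^[t' + k + (B' + k)] i := by
    intro i
    rw [← Function.iterate_add_apply]; congr 1; omega
  have hT : ∀ i, (pos τ x)^[e + 1] ((pos τ x)^[μ t + k'] i) = (pos τ x)^[μ t' + k'] i := by
    intro i
    rw [← Function.iterate_add_apply]; congr 1; omega
  have hSp : p t' ≤ (pos σ x)^[d + 1] (p t) := by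
    simp only [hp, ← hx0, ← iter_pos_one hσ]
    rw [← Function.iterate_add_apply, show d + 1 + t = t' by omega]
  have hTP : P t' ≤ (pos τ x)^[e + 1] (P t) := by
    simp only [hP, ← hx0, ← iter_pos_one hτ]
    rw [← Function.iterate_add_apply, show e + 1 + μ t = μ t' by omega]
  have hmono := g.strictMono hσ (t + k + (B' + k))
  have hpc := cnt_map (g.strictMono hσ (d + 1)) (p := Occ x (p t)) (p' := Occ x (p t'))
    (fun q h => occ_map hσ h hSp)
    (fun z => ⟨_, hmono.le_apply, by rw [hS]; exact hc1 z⟩)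
  -- The patterns force `σ^(t' - t)` to respect the occurrences of the longer prefixes.
  have hmapP : ∀ q, Occ x (P t) q → Occ x (P t') ((pos σ x)^[d + 1] q) := by
    intro q hq
    have hqp : Occ x (p t) q := fun r hr => hq r (hr.trans_le (hpP t))
    obtain ⟨i, hi1, hi2⟩ := exists_block hmono (iter_pos_zero _) q
    obtain ⟨δ, rfl⟩ := Nat.exists_eq_add_of_le hi1
    rw [iter_pos_succ hσ] at hi2
    have hδ : δ < len σ (t + k + (B' + k)) (x i) := by omega
    have hmem : cnt (fun s => Occ x (p t) ((pos σ x)^[t + k + (B' + k)] i + s)) δ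
        ∈ pattern σ x (t + k + (B' + k)) (p t) (P t) i := ⟨δ, hδ, hq, rfl⟩
    have hle := (cnt_mono (fun s => Occ x (p t) ((pos σ x)^[t + k + (B' + k)] i + s))
      hδ.le).trans (hb1 t i)
    obtain ⟨j, hj, h0, h1⟩ := hN i
    rw [pattern_congr hσ (hlowσp t) (hlowσ t) h0 h1] at hmem
    have hmem' := hd4 j hj _ hle hmem
    rw [← pattern_congr hσ (hlowσp t') (hlowσ t') h0 h1] at hmem'
    obtain ⟨δ', -, hocc, hcnt⟩ := hmem'
    have hoccp : Occ x (p t') ((pos σ x)^[t' + k + (B' + k)] i + δ') :=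
      fun r hr => hocc r (hr.trans_le (hpP t'))
    have heq : (pos σ x)^[t' + k + (B' + k)] i + δ'
        = (pos σ x)^[d + 1] ((pos σ x)^[t + k + (B' + k)] i + δ) := by
      refine cnt_inj hoccp (occ_map hσ hqp hSp) ?_
      rw [hpc, cnt_add, cnt_add, hc1, hcnt]
    rwa [← heq]
  have hcS := cnt_map (g.strictMono hσ (d + 1)) hmapP
    (fun z => ⟨_, hmono.le_apply, by rw [hS]; exact hc2 z⟩)
  have hcT := cnt_map (g'.strictMono hτ (e + 1)) (p := Occ x (P t)) (p' := Occ x (P t'))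
    (fun q h => occ_map hτ h hTP)
    (fun z => ⟨_, (g'.strictMono hτ (μ t + k')).le_apply, by rw [hT]; exact hc3 z⟩)
  refine ⟨P t, (hp0 t).trans_le (hpP t), e + 1, d + 1, by omega, by omega, fun q hq => ?_⟩
  exact cnt_inj (occ_map hτ hq hTP) (hmapP q hq) ((hcT q).trans (hcS q).symm)

theorem occursAt_iff {u : List A} (hu : IsPrefixSeq x u) (q : ℕ) :
    OccursAt x u q ↔ Occ x u.length q := by
  have hu' : factorAt x 0 u.length = u := hu
  rw [OccursAt]
  conv_lhs => rhs; rw [← hu']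
  rw [factorAt_eq_iff]
  simp [Occ]

/-- If powers of `σ` and `τ` agree on the return words to a prefix, they agree on the prefixes
of `x` that end where an occurrence begins. -/
theorem iter_eq_on_prefix {u : List A} (hu : IsPrefixSeq x u) {i j : ℕ}
    (h : ∀ w ∈ returnWords x u, (apply τ)^[i] w = (apply σ)^[j] w) (q : ℕ)
    (hq : Occ x u.length q) :
    (apply τ)^[i] (factorAt x 0 q) = (apply σ)^[j] (factorAt x 0 q) := by
  classical
  induction q using Nat.strong_induction_on with
  | _ q ih =>
    rcases Nat.eq_zero_or_pos q with rfl | hq0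
    · simp [factorAt, iter_nil]
    · have h0 : Occ x u.length 0 := fun r _ => by rw [zero_add]
      set z := Nat.findGreatest (Occ x u.length) (q - 1) with hz
      have hzo : Occ x u.length z := Nat.findGreatest_spec (Nat.zero_le _) h0
      have hzle : z ≤ q - 1 := Nat.findGreatest_le _
      have hret : factorAt x z (q - z) ∈ returnWords x u := by
        refine ⟨z, q, ⟨by omega, (occursAt_iff hu _).2 hzo, (occursAt_iff hu _).2 hq, ?_⟩, rfl⟩
        intro s hs1 hs2 hs3
        exact Nat.findGreatest_is_greatest hs1 (by omega) ((occursAt_iff hu _).1 hs3)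
      have hsplit := factorAt_add x 0 z (q - z)
      rw [zero_add, Nat.add_sub_cancel' (by omega)] at hsplit
      rw [hsplit, iter_append, iter_append, ih z (by omega) hzo, h _ hret]

theorem eq_of_powers_agree {y : ℕ → A} (g : Growth σ a B k) (g' : Growth τ a B' k')
    (hx0 : x 0 = a) (hy0 : y 0 = a) (hσ : SeqImage σ x x) (hτ : SeqImage τ y y)
    {u : List A} (hu : IsPrefixSeq x u) {i j : ℕ} (hi : 0 < i)
    (h : ∀ w ∈ returnWords x u, (apply τ)^[i] w = (apply σ)^[j] w) : x = y := by
  have hinf : ∀ t, ∃ q, t ≤ q ∧ Occ x u.length q := by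
    intro t
    obtain ⟨e, he, hea⟩ := g.frequently hσ t
    refine ⟨(pos σ x)^[u.length] e, he.trans (g.strictMono hσ _).le_apply,
      occ_map hσ (ℓ := 1) ?_ ?_⟩
    · intro r hr
      obtain rfl : r = 0 := by omega
      rw [add_zero, hea, hx0]
    · rw [iter_pos_one hσ, hx0]; exact (g.lt_len _).le
  -- `τ^i` maps prefixes of `x` to prefixes of `x`.
  have hstep : ∀ m, ∃ m', (apply τ)^[i] (factorAt x 0 m) = factorAt x 0 m' := by
    intro m
    obtain ⟨q, hmq, hq⟩ := hinf m
    obtain ⟨d, rfl⟩ := Nat.exists_eq_add_of_le hmq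
    have h1 := iter_eq_on_prefix hu h _ hq
    rw [iter_prefix hσ, factorAt_add, iter_append] at h1
    have hl := congrArg List.length h1
    rw [List.length_append, factorAt_length] at hl
    rw [← hl, factorAt_add] at h1
    exact ⟨_, List.append_inj_left h1 (by rw [factorAt_length])⟩
  have hpre : ∀ n, ∃ m, (apply τ)^[i * n] [a] = factorAt x 0 m := by
    intro n
    induction n with
    | zero => exact ⟨1, by rw [factorAt_one, hx0]; rfl⟩
    | succ n ih =>
      obtain ⟨m, hm⟩ := ih
      rw [Nat.mul_succ, add_comm, iter_add_apply, hm]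
      exact hstep m
  funext n
  obtain ⟨m, hm⟩ := hpre n
  have h2 := iter_prefix hτ (i * n) 1
  rw [factorAt_one, hy0, hm] at h2
  have hlen : n < m := by
    have h3 := g'.lt_len (i * n)
    rw [len, hm, factorAt_length] at h3
    have := Nat.le_mul_of_pos_left n hi
    omega
  rw [← factorAt_inj h2] at h2
  simpa using (factorAt_eq_iff _ _ _ _ _).1 h2 n hlen

end

/-- Let `σ` and `τ` be primitive substitutions prolongable on `a` with
fixed points `x = σ^ω(a)`, `y = τ^ω(a)`, `x` non-periodic. Then `x = y` iff `x` and
`y` share a common nonempty prefix `u` for which there exist positive integers `i`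
and `j` with `τ_u^i = σ_u^j`, i.e. such that `τ^i(w) = σ^j(w)` for every return word
`w ∈ ℛ_{x,u}`. -/
theorem same_fixed_point_iff_powers_agree_on_return_words {A : Type*}
    [Fintype A] [DecidableEq A]
    (σ τ : A → List A) (a : A)
    (hσ : Primitive σ) (hτ : Primitive τ)
    (hσa : Prolongable σ a) (hτa : Prolongable τ a)
    (x : ℕ → A) (hx0 : x 0 = a) (hxfix : SeqImage σ x x)
    (y : ℕ → A) (hy0 : y 0 = a) (hyfix : SeqImage τ y y)
    (hnp : ¬ IsUltimatelyPeriodic x) :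
    x = y ↔
      ∃ u : List A, u ≠ [] ∧ IsPrefixSeq x u ∧ IsPrefixSeq y u ∧
        ∃ i j : ℕ, 0 < i ∧ 0 < j ∧
          ∀ w ∈ returnWords x u, (apply τ)^[i] w = (apply σ)^[j] w := by
  obtain ⟨B, k, g⟩ := exists_growth hσ hσa
  obtain ⟨B', k', g'⟩ := exists_growth hτ hτa
  constructor
  · rintro rfl
    obtain ⟨P, hP, i, j, hi, hj, h⟩ := exists_powers_agree g g' hx0 hxfix hyfix hnp
    have hu : IsPrefixSeq x (factorAt x 0 P) := by
      rw [IsPrefixSeq, OccursAt, factorAt_length]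
    refine ⟨factorAt x 0 P, ?_, hu, hu, i, j, hi, hj, ?_⟩
    · rw [← List.length_pos_iff, factorAt_length]; exact hP
    · rintro w ⟨s, e, ⟨hse, hs, he, -⟩, rfl⟩
      rw [occursAt_iff hu, factorAt_length] at hs he
      rw [(iter_factor hyfix i s (e - s)).2, (iter_factor hxfix j s (e - s)).2,
        Nat.add_sub_cancel' hse.le, h s hs, h e he]
  · rintro ⟨u, -, hu, -, i, j, hi, -, h⟩
    exact eq_of_powers_agree g g' hx0 hy0 hxfix hyfix hu hi h
end Rauzy
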